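/- Let λ be a real number with λ > -1/2. Then the best Markov constants for n = 1 and n = 2 are given exactly by (c_1(λ))² = 2(1+λ) and (c_2(λ))² = 4(2+λ)(2+2λ)/(2λ+1). -/

import Mathlib

open Polynomial Filter

/-- The weighted `L_2` norm with the Gegenbauer weight `w_lam(t) = (1-t^2)^(lam-1/2)`. -/
noncomputable def gegNorm (lam : ℝ) (f : ℝ → ℝ) : ℝ :=
  (∫ x in (-1:ℝ)..1, (f x) ^ 2 * (1 - x ^ 2) ^ (lam - 1/2)) ^ ((1:ℝ)/2)

/-- The best Markov constant `c_n(lam)` in `‖p'‖ ≤ c_n(lam) ‖p‖` for polynomials of degree ≤ n. -/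
noncomputable def markovConst (lam : ℝ) (n : ℕ) : ℝ :=
  sSup { r : ℝ | ∃ p : Polynomial ℝ, p ≠ 0 ∧ p.natDegree ≤ n ∧
    r = gegNorm lam (fun x => (Polynomial.derivative p).eval x) /
        gegNorm lam (fun x => p.eval x) }

/-!
The moments of the weight `(1 - x ^ 2) ^ (lam - 1/2)` satisfy
`(k + 2 * lam + 2) * m (k + 2) = (k + 1) * m k` (integrate the derivative of
`x ^ (k + 1) * (1 - x ^ 2) ^ (lam + 1/2)`), and the odd ones vanish. Hence `1`, `X` and
`X ^ 2 - 1 / (2 * (lam + 1))` are orthogonal, and so are their derivatives: in this basis both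
`‖p‖ ^ 2` and `‖p'‖ ^ 2` are diagonal quadratic forms for `deg p ≤ 2`. The squared Markov constant
is the largest ratio of diagonal entries, attained at the basis element of degree `n`.
-/

lemma one_sub_sq_pos {x : ℝ} (hx : x ∈ Set.Ioo (-1) 1) : 0 < 1 - x ^ 2 := by
  nlinarith [hx.1, hx.2]

lemma intervalIntegrable_one_sub_sq_rpow {a : ℝ} (ha : -1 < a) :
    IntervalIntegrable (fun x : ℝ ↦ (1 - x ^ 2) ^ a) MeasureTheory.volume (-1) 1 := by
  have singular_factor :
      IntervalIntegrable (fun x : ℝ ↦ (1 - x) ^ a) MeasureTheory.volume 0 1 := by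
    simpa using
      ((intervalIntegral.intervalIntegrable_rpow' (a := 0) (b := 1) ha).comp_sub_left 1).symm
  have regular_factor : ContinuousOn (fun x : ℝ ↦ (1 + x) ^ a) (Set.uIcc 0 1) := by
    rw [Set.uIcc_of_le zero_le_one]
    exact ContinuousOn.rpow_const (by fun_prop) fun x hx ↦ Or.inl (by linarith [hx.1])
  have right_half :
      IntervalIntegrable (fun x : ℝ ↦ (1 - x ^ 2) ^ a) MeasureTheory.volume 0 1 := by
    refine (singular_factor.mul_continuousOn regular_factor).congr fun x hx ↦ ?_
    rw [Set.uIoc_of_le zero_le_one] at hx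
    rw [← Real.mul_rpow (by linarith [hx.2]) (by linarith [hx.1])]
    ring_nf
  have left_half :
      IntervalIntegrable (fun x : ℝ ↦ (1 - x ^ 2) ^ a) MeasureTheory.volume (-1) 0 := by
    simpa using (right_half.comp_sub_left 0).symm
  exact left_half.trans right_half

lemma intervalIntegrable_mul_one_sub_sq_rpow {a : ℝ} (ha : -1 < a) {f : ℝ → ℝ}
    (hf : Continuous f) :
    IntervalIntegrable (fun x : ℝ ↦ f x * (1 - x ^ 2) ^ a) MeasureTheory.volume (-1) 1 :=
  (intervalIntegrable_one_sub_sq_rpow ha).continuousOn_mul hf.continuousOn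

lemma hasDerivAt_pow_mul_one_sub_sq_rpow {x : ℝ} (hx : 1 - x ^ 2 ≠ 0) (k : ℕ) (a : ℝ) :
    HasDerivAt (fun x : ℝ ↦ x ^ (k + 1) * (1 - x ^ 2) ^ (a + 1))
      (((k + 1) * x ^ k - (k + 2 * a + 3) * x ^ (k + 2)) * (1 - x ^ 2) ^ a) x := by
  have hbase : HasDerivAt (fun x : ℝ ↦ 1 - x ^ 2) (-(2 * x)) x := by
    simpa using (hasDerivAt_pow 2 x).const_sub 1
  refine ((hasDerivAt_pow (k + 1) x).mul
    (hbase.rpow_const (p := a + 1) (Or.inl hx))).congr_deriv ?_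
  rw [add_sub_cancel_right, Real.rpow_add_one hx, Nat.add_sub_cancel]
  push_cast
  ring

section Moments

/-- The `k`-th moment of the Gegenbauer weight `w_lam`, that is `∫ x ^ k * w_lam x` over
`[-1, 1]`. -/
noncomputable def gegenbauerMoment (lam : ℝ) (k : ℕ) : ℝ :=
  ∫ x in (-1:ℝ)..1, x ^ k * (1 - x ^ 2) ^ (lam - 1/2)

lemma gegenbauerMoment_eq_zero_of_odd (lam : ℝ) {k : ℕ} (hk : Odd k) :
    gegenbauerMoment lam k = 0 := by
  have hneg : gegenbauerMoment lam k = -gegenbauerMoment lam k := by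
    have := intervalIntegral.integral_comp_neg (a := -1) (b := 1)
      fun x : ℝ ↦ x ^ k * (1 - x ^ 2) ^ (lam - 1/2)
    simpa only [gegenbauerMoment, hk.neg_pow, neg_sq, neg_mul, intervalIntegral.integral_neg,
      neg_neg] using this.symm
  linarith

variable {lam : ℝ}

lemma gegenbauerMoment_zero_pos (hlam : -(1 / 2 : ℝ) < lam) : 0 < gegenbauerMoment lam 0 := by
  refine intervalIntegral.intervalIntegral_pos_of_pos_on
    (intervalIntegrable_mul_one_sub_sq_rpow (by linarith) (by fun_prop)) (fun x hx ↦ ?_)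
    (by norm_num)
  have := one_sub_sq_pos hx
  positivity

lemma gegenbauerMoment_add_two (hlam : -(1 / 2 : ℝ) < lam) (k : ℕ) :
    (k + 2 * lam + 2) * gegenbauerMoment lam (k + 2) = (k + 1) * gegenbauerMoment lam k := by
  have ha : -1 < lam - 1/2 := by linarith
  have hintegrable (c : ℝ) (j : ℕ) := (intervalIntegrable_mul_one_sub_sq_rpow ha
    (f := fun x ↦ x ^ j) (by fun_prop)).const_mul c
  have hftc := intervalIntegral.integral_eq_sub_of_hasDerivAt_of_le
    (f := fun x : ℝ ↦ x ^ (k + 1) * (1 - x ^ 2) ^ (lam - 1/2 + 1)) (by norm_num : (-1 : ℝ) ≤ 1)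
    (ContinuousOn.mul (by fun_prop)
      (ContinuousOn.rpow_const (by fun_prop) fun x _ ↦ Or.inr (by linarith)))
    (fun x hx ↦ hasDerivAt_pow_mul_one_sub_sq_rpow (one_sub_sq_pos hx).ne' k (lam - 1/2))
    (intervalIntegrable_mul_one_sub_sq_rpow ha (by fun_prop))
  have hboundary : (0 : ℝ) ^ (lam - 1/2 + 1) = 0 := Real.zero_rpow (by linarith)
  simp only [one_pow, neg_one_sq, sub_self, hboundary, mul_zero, sub_mul, mul_assoc] at hftc
  rw [intervalIntegral.integral_sub (hintegrable _ _) (hintegrable _ _),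
    intervalIntegral.integral_const_mul, intervalIntegral.integral_const_mul] at hftc
  unfold gegenbauerMoment
  linear_combination -hftc

lemma gegenbauerMoment_two (hlam : -(1 / 2 : ℝ) < lam) :
    gegenbauerMoment lam 2 = gegenbauerMoment lam 0 / (2 * (lam + 1)) := by
  have hrec := gegenbauerMoment_add_two hlam 0
  rw [eq_div_iff (by linarith)]
  push_cast at hrec
  linarith

lemma gegenbauerMoment_four (hlam : -(1 / 2 : ℝ) < lam) :
    gegenbauerMoment lam 4 =
      3 * gegenbauerMoment lam 0 / (4 * (lam + 1) * (lam + 2)) := by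
  have hrec : (2 * lam + 4) * gegenbauerMoment lam 4 = 3 * gegenbauerMoment lam 2 := by
    have := gegenbauerMoment_add_two hlam 2
    norm_num at this
    linarith
  have h1 : lam + 1 ≠ 0 := by linarith
  have h2 : lam + 2 ≠ 0 := by linarith
  rw [gegenbauerMoment_two hlam] at hrec
  field_simp at hrec ⊢
  linear_combination hrec

end Moments

section Norm

lemma gegNorm_eq_sqrt (lam : ℝ) (f : ℝ → ℝ) :
    gegNorm lam f = √(∫ x in (-1:ℝ)..1, f x ^ 2 * (1 - x ^ 2) ^ (lam - 1/2)) :=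
  (Real.sqrt_eq_rpow _).symm

lemma gegNorm_nonneg (lam : ℝ) (f : ℝ → ℝ) : 0 ≤ gegNorm lam f := by
  rw [gegNorm_eq_sqrt]
  exact Real.sqrt_nonneg _

lemma gegNorm_sq (lam : ℝ) (f : ℝ → ℝ) :
    gegNorm lam f ^ 2 = ∫ x in (-1:ℝ)..1, f x ^ 2 * (1 - x ^ 2) ^ (lam - 1/2) := by
  rw [gegNorm_eq_sqrt, Real.sq_sqrt]
  refine intervalIntegral.integral_nonneg (by norm_num) fun x hx ↦ ?_
  have : 0 ≤ 1 - x ^ 2 := by nlinarith [hx.1, hx.2]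
  positivity

lemma markovConst_sq_eq_of_attained {lam K : ℝ} {n : ℕ}
    (hle : ∀ p : ℝ[X], p.natDegree ≤ n →
      gegNorm lam (fun x ↦ (derivative p).eval x) ^ 2 ≤ K * gegNorm lam (fun x ↦ p.eval x) ^ 2)
    {q : ℝ[X]} (hq : q.natDegree ≤ n) (hq0 : gegNorm lam (fun x ↦ q.eval x) ≠ 0)
    (heq : gegNorm lam (fun x ↦ (derivative q).eval x) ^ 2 =
      K * gegNorm lam (fun x ↦ q.eval x) ^ 2) :
    markovConst lam n ^ 2 = K := by
  have hK : 0 ≤ K := by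
    rw [eq_div_of_mul_eq (pow_ne_zero 2 hq0) heq.symm]
    positivity
  have hgreatest : IsGreatest { r : ℝ | ∃ p : ℝ[X], p ≠ 0 ∧ p.natDegree ≤ n ∧
      r = gegNorm lam (fun x ↦ (derivative p).eval x) / gegNorm lam (fun x ↦ p.eval x) } √K := by
    refine ⟨⟨q, ?_, hq, ?_⟩, ?_⟩
    · rintro rfl
      exact hq0 (by simp [gegNorm_eq_sqrt])
    · rw [eq_div_iff hq0, ← Real.sqrt_sq (gegNorm_nonneg lam fun x ↦ (derivative q).eval x), heq,
        Real.sqrt_mul hK, Real.sqrt_sq (gegNorm_nonneg _ _)]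
    · rintro r ⟨p, -, hp, rfl⟩
      refine Real.le_sqrt_of_sq_le ?_
      rw [div_pow]
      exact div_le_of_le_mul₀ (sq_nonneg _) hK (hle p hp)
  rw [markovConst, hgreatest.csSup_eq, Real.sq_sqrt hK]

variable {lam : ℝ}

lemma gegNorm_eval_sq_eq_sum_moment (hlam : -(1 / 2 : ℝ) < lam) {p : ℝ[X]} {n : ℕ}
    (hp : p.natDegree < n) :
    gegNorm lam (fun x ↦ p.eval x) ^ 2 =
      ∑ i ∈ Finset.range n, ∑ j ∈ Finset.range n,
        p.coeff i * p.coeff j * gegenbauerMoment lam (i + j) := by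
  have hintegrable (c : ℝ) (k : ℕ) := (intervalIntegrable_mul_one_sub_sq_rpow (a := lam - 1/2)
    (by linarith) (f := fun x ↦ x ^ k) (by fun_prop)).const_mul c
  have hexpand (x : ℝ) : p.eval x ^ 2 * (1 - x ^ 2) ^ (lam - 1/2) =
      ∑ i ∈ Finset.range n, ∑ j ∈ Finset.range n,
        p.coeff i * p.coeff j * (x ^ (i + j) * (1 - x ^ 2) ^ (lam - 1/2)) := by
    rw [eval_eq_sum_range' hp, sq, Finset.sum_mul_sum, Finset.sum_mul]
    refine Finset.sum_congr rfl fun i _ ↦ ?_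
    rw [Finset.sum_mul]
    exact Finset.sum_congr rfl fun j _ ↦ by ring
  simp only [gegNorm_sq, hexpand]
  rw [intervalIntegral.integral_finsetSum fun i _ ↦ by
    simpa only [Finset.sum_fn] using IntervalIntegrable.sum _ fun j _ ↦ hintegrable _ _]
  refine Finset.sum_congr rfl fun i _ ↦ ?_
  rw [intervalIntegral.integral_finsetSum fun j _ ↦ hintegrable _ _]
  simp only [intervalIntegral.integral_const_mul, gegenbauerMoment]

end Norm

section Quadratic

/-- The monic orthogonal polynomial of degree two for the Gegenbauer weight `w_lam`, a multiple of
the classical `C_2^(lam)` when `lam ≠ 0`. -/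
noncomputable def monicGegenbauerTwo (lam : ℝ) : ℝ[X] :=
  X ^ 2 - C (1 / (2 * (lam + 1)))

lemma natDegree_monicGegenbauerTwo_le (lam : ℝ) : (monicGegenbauerTwo lam).natDegree ≤ 2 := by
  unfold monicGegenbauerTwo
  compute_degree

variable {lam : ℝ} {p : ℝ[X]}

-- The squared terms are the coordinates of `p` in the orthogonal basis `1`, `X`,
-- `monicGegenbauerTwo lam`.
lemma gegNorm_eval_sq_of_natDegree_le_two (hlam : -(1 / 2 : ℝ) < lam) (hp : p.natDegree ≤ 2) :
    gegNorm lam (fun x ↦ p.eval x) ^ 2 =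
      gegenbauerMoment lam 0 *
        ((p.coeff 0 + p.coeff 2 / (2 * (lam + 1))) ^ 2 + p.coeff 1 ^ 2 / (2 * (lam + 1)) +
          (2 * lam + 1) / (4 * (lam + 1) ^ 2 * (lam + 2)) * p.coeff 2 ^ 2) := by
  have h1 : lam + 1 ≠ 0 := by linarith
  have h2 : lam + 2 ≠ 0 := by linarith
  have m1 : gegenbauerMoment lam 1 = 0 := gegenbauerMoment_eq_zero_of_odd lam (by decide)
  have m3 : gegenbauerMoment lam 3 = 0 := gegenbauerMoment_eq_zero_of_odd lam (by decide)
  rw [gegNorm_eval_sq_eq_sum_moment hlam (Nat.lt_succ_of_le hp)]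
  simp only [Finset.sum_range_succ, Finset.sum_range_zero, Nat.reduceAdd, m1, m3,
    gegenbauerMoment_two hlam, gegenbauerMoment_four hlam]
  field_simp
  ring

lemma gegNorm_derivative_eval_sq_of_natDegree_le_two (hlam : -(1 / 2 : ℝ) < lam)
    (hp : p.natDegree ≤ 2) :
    gegNorm lam (fun x ↦ (derivative p).eval x) ^ 2 =
      gegenbauerMoment lam 0 * (p.coeff 1 ^ 2 + 2 / (lam + 1) * p.coeff 2 ^ 2) := by
  have h1 : lam + 1 ≠ 0 := by linarith
  have h3 : p.coeff 3 = 0 := coeff_eq_zero_of_natDegree_lt (by lia)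
  rw [gegNorm_eval_sq_of_natDegree_le_two hlam ((natDegree_derivative_le p).trans (by lia))]
  simp only [coeff_derivative, Nat.reduceAdd, h3]
  push_cast
  field_simp
  ring

-- The extremality of `monicGegenbauerTwo lam`, divided by the zeroth moment.
lemma quadratic_diagonal_ratio (hlam : -(1 / 2 : ℝ) < lam) :
    4 * (2 + lam) * (2 + 2 * lam) / (2 * lam + 1) *
      ((2 * lam + 1) / (4 * (lam + 1) ^ 2 * (lam + 2))) = 2 / (lam + 1) := by
  have h1 : lam + 1 ≠ 0 := by linarith
  have h2 : lam + 2 ≠ 0 := by linarith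
  rw [div_mul_div_cancel₀ (by linarith)]
  field_simp
  ring

lemma gegNorm_derivative_eval_sq_le_of_natDegree_le_one (hlam : -(1 / 2 : ℝ) < lam)
    (hp : p.natDegree ≤ 1) :
    gegNorm lam (fun x ↦ (derivative p).eval x) ^ 2 ≤
      2 * (1 + lam) * gegNorm lam (fun x ↦ p.eval x) ^ 2 := by
  have h0 := gegenbauerMoment_zero_pos hlam
  have h1 : 0 < lam + 1 := by linarith
  have hcoeff : p.coeff 2 = 0 := coeff_eq_zero_of_natDegree_lt (by lia)
  rw [gegNorm_derivative_eval_sq_of_natDegree_le_two hlam (by lia),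
    gegNorm_eval_sq_of_natDegree_le_two hlam (by lia), hcoeff, mul_left_comm]
  gcongr
  calc p.coeff 1 ^ 2 + 2 / (lam + 1) * 0 ^ 2
      ≤ 2 * (lam + 1) * p.coeff 0 ^ 2 + p.coeff 1 ^ 2 := by
        have : 0 ≤ 2 * (lam + 1) * p.coeff 0 ^ 2 := by positivity
        linarith
    _ = _ := by field_simp; ring

lemma gegNorm_derivative_eval_sq_le_of_natDegree_le_two (hlam : -(1 / 2 : ℝ) < lam)
    (hp : p.natDegree ≤ 2) :
    gegNorm lam (fun x ↦ (derivative p).eval x) ^ 2 ≤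
      4 * (2 + lam) * (2 + 2 * lam) / (2 * lam + 1) * gegNorm lam (fun x ↦ p.eval x) ^ 2 := by
  have h0 := gegenbauerMoment_zero_pos hlam
  have ratio_two := quadratic_diagonal_ratio hlam
  set K := 4 * (2 + lam) * (2 + 2 * lam) / (2 * lam + 1) with hK
  have ratio_one : 1 ≤ K / (2 * (lam + 1)) := by
    rw [hK, div_div, one_le_div (mul_pos (by linarith) (by linarith))]
    nlinarith
  have hK_nonneg : 0 ≤ K :=
    div_nonneg (mul_nonneg (by linarith) (by linarith)) (by linarith)
  rw [gegNorm_derivative_eval_sq_of_natDegree_le_two hlam hp,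
    gegNorm_eval_sq_of_natDegree_le_two hlam hp, mul_left_comm]
  gcongr
  calc p.coeff 1 ^ 2 + 2 / (lam + 1) * p.coeff 2 ^ 2
      ≤ K * (p.coeff 0 + p.coeff 2 / (2 * (lam + 1))) ^ 2 +
          K / (2 * (lam + 1)) * p.coeff 1 ^ 2 + 2 / (lam + 1) * p.coeff 2 ^ 2 := by
        gcongr
        exact le_add_of_nonneg_of_le (by positivity) (le_mul_of_one_le_left (sq_nonneg _) ratio_one)
    _ = _ := by
        rw [← ratio_two]
        ring

lemma gegNorm_eval_X_sq (hlam : -(1 / 2 : ℝ) < lam) :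
    gegNorm lam (fun x ↦ (X : ℝ[X]).eval x) ^ 2 =
      gegenbauerMoment lam 0 / (2 * (lam + 1)) := by
  rw [gegNorm_eval_sq_of_natDegree_le_two hlam (by simp)]
  simp [coeff_X, div_eq_mul_inv]

lemma gegNorm_eval_X_ne_zero (hlam : -(1 / 2 : ℝ) < lam) :
    gegNorm lam (fun x ↦ (X : ℝ[X]).eval x) ≠ 0 := by
  have h0 := gegenbauerMoment_zero_pos hlam
  have h1 : 0 < lam + 1 := by linarith
  rw [← sq_pos_iff, gegNorm_eval_X_sq hlam]
  positivity

lemma gegNorm_derivative_eval_X_sq (hlam : -(1 / 2 : ℝ) < lam) :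
    gegNorm lam (fun x ↦ (derivative (X : ℝ[X])).eval x) ^ 2 =
      2 * (1 + lam) * gegNorm lam (fun x ↦ (X : ℝ[X]).eval x) ^ 2 := by
  rw [gegNorm_derivative_eval_sq_of_natDegree_le_two hlam (by simp), gegNorm_eval_X_sq hlam,
    add_comm 1 lam, mul_div_cancel₀ _ (by linarith : 2 * (lam + 1) ≠ 0)]
  simp [coeff_X]

lemma gegNorm_eval_monicGegenbauerTwo_sq (hlam : -(1 / 2 : ℝ) < lam) :
    gegNorm lam (fun x ↦ (monicGegenbauerTwo lam).eval x) ^ 2 =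
      gegenbauerMoment lam 0 * ((2 * lam + 1) / (4 * (lam + 1) ^ 2 * (lam + 2))) := by
  rw [gegNorm_eval_sq_of_natDegree_le_two hlam (natDegree_monicGegenbauerTwo_le lam)]
  simp [monicGegenbauerTwo, coeff_C]

lemma gegNorm_eval_monicGegenbauerTwo_ne_zero (hlam : -(1 / 2 : ℝ) < lam) :
    gegNorm lam (fun x ↦ (monicGegenbauerTwo lam).eval x) ≠ 0 := by
  have h0 := gegenbauerMoment_zero_pos hlam
  have h1 : 0 < lam + 1 := by linarith
  have h2 : 0 < lam + 2 := by linarith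
  have h3 : 0 < 2 * lam + 1 := by linarith
  rw [← sq_pos_iff, gegNorm_eval_monicGegenbauerTwo_sq hlam]
  positivity

lemma gegNorm_derivative_eval_monicGegenbauerTwo_sq (hlam : -(1 / 2 : ℝ) < lam) :
    gegNorm lam (fun x ↦ (derivative (monicGegenbauerTwo lam)).eval x) ^ 2 =
      4 * (2 + lam) * (2 + 2 * lam) / (2 * lam + 1) *
        gegNorm lam (fun x ↦ (monicGegenbauerTwo lam).eval x) ^ 2 := by
  rw [gegNorm_derivative_eval_sq_of_natDegree_le_two hlam (natDegree_monicGegenbauerTwo_le lam),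
    gegNorm_eval_monicGegenbauerTwo_sq hlam, mul_left_comm, quadratic_diagonal_ratio hlam]
  simp [monicGegenbauerTwo]

end Quadratic

theorem markov_constant_n_one_two (lam : ℝ) (hlam : -(1/2 : ℝ) < lam) :
    (markovConst lam 1)^2 = 2 * (1 + lam) ∧
    (markovConst lam 2)^2 = 4 * (2 + lam) * (2 + 2*lam) / (2*lam + 1) := by
  constructor
  · exact markovConst_sq_eq_of_attained
      (fun _ ↦ gegNorm_derivative_eval_sq_le_of_natDegree_le_one hlam)
      natDegree_X_le (gegNorm_eval_X_ne_zero hlam) (gegNorm_derivative_eval_X_sq hlam)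
  · exact markovConst_sq_eq_of_attained
      (fun _ ↦ gegNorm_derivative_eval_sq_le_of_natDegree_le_two hlam)
      (natDegree_monicGegenbauerTwo_le lam) (gegNorm_eval_monicGegenbauerTwo_ne_zero hlam)
      (gegNorm_derivative_eval_monicGegenbauerTwo_sq hlam)
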